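/- Let (A, 𝔪, k) be a commutative Noetherian local ring, let M be a finitely generated A-module having free reducible complexity, and let t be a natural number. If for every finitely generated A-module N having free reducible complexity with cx N = t one has Ext^i_A(M,N) = 0 for all i ≫ 0, then cx M < t. -/

import Mathlib

open CategoryTheory Opposite Filter IsLocalRing

universe u

namespace ComplexityTest

variable (A : Type u) [CommRing A] [IsLocalRing A]

structure MinFreeRes (M : Type u) [AddCommGroup M] [Module A M] : Type u where
  b : ℕ → ℕ
  d : (n : ℕ) → ((Fin (b (n + 1)) → A) →ₗ[A] (Fin (b n) → A))
  aug : (Fin (b 0) → A) →ₗ[A] M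
  aug_surjective : Function.Surjective aug
  exact_zero : Function.Exact (d 0) aug
  exact_succ : ∀ n, Function.Exact (d (n + 1)) (d n)
  minimal : ∀ n x i, d n x i ∈ maximalIdeal A

variable (M : Type u) [AddCommGroup M] [Module A M]

def HasComplexityLE (t : ℕ) : Prop :=
  ∃ (R : MinFreeRes A M) (a : ℝ), ∀ᶠ n : ℕ in atTop, (R.b n : ℝ) ≤ a * (n : ℝ) ^ ((t : ℤ) - 1)

noncomputable def complexity : ℕ∞ :=
  sInf {c : ℕ∞ | ∃ t : ℕ, c = t ∧ HasComplexityLE A M t}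

def HasProjDimLE (t : ℕ) : Prop :=
  ∃ R : MinFreeRes A M, ∀ i, t < i → R.b i = 0

noncomputable def projDim : ℕ∞ :=
  sInf {c : ℕ∞ | ∃ t : ℕ, c = t ∧ HasProjDimLE A M t}

def HasFiniteProjDim : Prop :=
  ∃ t : ℕ, HasProjDimLE A M t

def IsSyzygyOf (S : Type u) [AddCommGroup S] [Module A S] : ℕ → Prop
  | 0 => Nonempty (S ≃ₗ[A] M)
  | 1 => ∃ R : MinFreeRes A M, Nonempty (S ≃ₗ[A] (LinearMap.ker R.aug))
  | (n + 2) => ∃ R : MinFreeRes A M, Nonempty (S ≃ₗ[A] (LinearMap.ker (R.d n)))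

variable {A M} in
def IsSES {K S : Type u} [AddCommGroup K] [Module A K] [AddCommGroup S] [Module A S]
    (f : M →ₗ[A] K) (g : K →ₗ[A] S) : Prop :=
  Function.Injective f ∧ Function.Exact f g ∧ Function.Surjective g

noncomputable def extModule (n : ℕ) (N : Type u) [AddCommGroup N] [Module A N] :
    ModuleCat A :=
  ((_root_.Ext A (ModuleCat.{u} A) n).obj (op (ModuleCat.of A M))).obj (ModuleCat.of A N)

def extVanish (n : ℕ) (N : Type u) [AddCommGroup N] [Module A N] : Prop :=
  Subsingleton (extModule A M n N)

/-- The `n`-th Tor module `Tor^A_n(M, N)`. -/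
noncomputable def torModule (n : ℕ) (N : Type u) [AddCommGroup N] [Module A N] :
    ModuleCat A :=
  ((Tor (ModuleCat.{u} A) n).obj (ModuleCat.of A M)).obj (ModuleCat.of A N)

/-- The vanishing `Tor^A_n(M, N) = 0`. -/
def torVanish (n : ℕ) (N : Type u) [AddCommGroup N] [Module A N] : Prop :=
  Subsingleton (torModule A M n N)

noncomputable def depth : ℕ∞ :=
  sInf {c : ℕ∞ | ∃ i : ℕ, c = i ∧ ¬ extVanish A (ResidueField A) i M}

variable {A}

/-- The category of modules of *free reducible complexity* over the local ring `A`.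
It is defined inductively: every finitely generated module of finite projective
dimension has free reducible complexity, and a finitely generated module `M` of finite
positive complexity has free reducible complexity provided there is a short exact
sequence `0 → M → K → Ω^n_A(M) → 0` (necessarily induced by a cohomology element
`η ∈ Ext^{n+1}_A(M,M)`) where `K` is a finitely generated module of free reducible
complexity with `cx K = cx M - 1`. -/
inductive HasFreeRedCxCat : ModuleCat.{u} A → Prop
  | of_finite_projDim (M : ModuleCat.{u} A) (hfg : Module.Finite A M)
      (h : HasFiniteProjDim A M) : HasFreeRedCxCat M
  | step (M K S : ModuleCat.{u} A) (n : ℕ)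
      (hfg : Module.Finite A M) (hKfg : Module.Finite A K)
      (hpos : 0 < complexity A M) (hfin : complexity A M ≠ ⊤)
      (hsyz : IsSyzygyOf A M S n)
      (f : M →ₗ[A] K) (g : K →ₗ[A] S) (hses : IsSES f g)
      (hcx : complexity A K = complexity A M - 1)
      (hK : HasFreeRedCxCat K) : HasFreeRedCxCat M

/-- The category of modules of *reducible complexity* over the local ring `A`: as for
free reducible complexity, but where in addition the reductions are required to
preserve depth. -/
inductive HasRedCxCat : ModuleCat.{u} A → Prop
  | of_finite_projDim (M : ModuleCat.{u} A) (hfg : Module.Finite A M)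
      (h : HasFiniteProjDim A M) : HasRedCxCat M
  | step (M K S : ModuleCat.{u} A) (n : ℕ)
      (hfg : Module.Finite A M) (hKfg : Module.Finite A K)
      (hpos : 0 < complexity A M) (hfin : complexity A M ≠ ⊤)
      (hsyz : IsSyzygyOf A M S n)
      (f : M →ₗ[A] K) (g : K →ₗ[A] S) (hses : IsSES f g)
      (hcx : complexity A K = complexity A M - 1)
      (hdepth : depth A K = depth A M)
      (hK : HasRedCxCat K) : HasRedCxCat M

variable (A)

/-- `M` has free reducible complexity. -/
def HasFreeRedCx (M : Type u) [AddCommGroup M] [Module A M] : Prop :=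
  HasFreeRedCxCat (ModuleCat.of A M)

/-- `M` has reducible complexity. -/
def HasRedCx (M : Type u) [AddCommGroup M] [Module A M] : Prop :=
  HasRedCxCat (ModuleCat.of A M)

/-- A Noetherian local ring is Gorenstein if it has finite injective dimension over
itself; by Bass' characterization, this is equivalent to the vanishing of
`Ext^i_A(k, A)` for all sufficiently large `i`. -/
def IsGorenstein : Prop :=
  ∃ n : ℕ, ∀ i : ℕ, n < i → extVanish A (ResidueField A) i A

end ComplexityTest

open ComplexityTest

/-!
Let `0 → M → K → Ωⁿ M → 0` be a reduction of `M`, coming from a class `η ∈ Ext^{n+1}(M, M)`.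
Dimension shifting shows that the vanishing of `Ext^i(M, N)` for `i ≫ 0` passes from `M` to `K`, so
by induction along the chain of reductions `cx K < t`, hence `cx M = cx K + 1 ≤ t`. If `cx M = t`,
then `M` is itself one of the test modules, so `Ext^i(M, M) = 0` for `i ≫ 0` and `η` is nilpotent.
The kernel of multiplication by `η` on `Ext^i(M, k)` is covered by `Ext^i(K, k)`, so `η ^ m = 0`
bounds `β_i(M)` by a sum of `m` shifted Betti numbers of `K`. Therefore `cx M ≤ cx K`, which is
absurd.
-/

namespace ComplexityTest

open Abelian Asymptotics

section KernelLength

variable {R U V W : Type*} [Ring R] [AddCommGroup U] [AddCommGroup V] [AddCommGroup W]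
  [Module R U] [Module R V] [Module R W]

lemma length_le_add_of_exact {f : U →ₗ[R] V} {g : V →ₗ[R] W} (h : Function.Exact f g) :
    Module.length R V ≤ Module.length R U + Module.length R W := by
  rw [Module.length_eq_add_of_exact (LinearMap.range f).subtype (LinearMap.range f).mkQ
    (Submodule.subtype_injective _) (Submodule.mkQ_surjective _)
    (LinearMap.exact_subtype_mkQ _)]
  refine add_le_add (Module.length_le_of_surjective f.rangeRestrict f.surjective_rangeRestrict) ?_
  exact Module.length_le_of_injective ((LinearMap.range f).liftQ g h.linearMap_ker_eq.ge)
    (LinearMap.ker_eq_bot.1 (Submodule.ker_liftQ_eq_bot' _ _ h.linearMap_ker_eq.symm))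

lemma length_ker_comp_le (f : U →ₗ[R] V) (g : V →ₗ[R] W) :
    Module.length R (LinearMap.ker (g ∘ₗ f)) ≤
      Module.length R (LinearMap.ker f) + Module.length R (LinearMap.ker g) := by
  refine length_le_add_of_exact (f := Submodule.inclusion (LinearMap.ker_le_ker_comp f g))
    (g := f.restrict fun _ hx => hx) fun x => ⟨fun hx => ⟨⟨x, congrArg Subtype.val hx⟩, rfl⟩, ?_⟩
  rintro ⟨y, rfl⟩
  exact Subtype.ext y.2

end KernelLength

section AbelianCategory

universe w v u'

variable {C : Type u'} [Category.{v} C] [Abelian C]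

lemma isZero_ext_obj_succ_iff {R : Type*} [Ring R] [Linear R C] [EnoughProjectives C]
    [HasExt.{w} C] (X Y : C) (n : ℕ) :
    Limits.IsZero (((_root_.Ext R C (n + 1)).obj (op X)).obj Y) ↔
      Subsingleton (Abelian.Ext.{w} X Y (n + 1)) := by
  let P := projectiveResolution X
  have exact_iff : Limits.IsZero (((_root_.Ext R C (n + 1)).obj (op X)).obj Y) ↔
      ∀ f : P.complex.X (n + 1) ⟶ Y, P.complex.d (n + 2) (n + 1) ≫ f = 0 →
        ∃ g, P.complex.d (n + 1) n ≫ g = f := by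
    rw [(P.isoExt (R := R) (n + 1) Y).isZero_iff, ← HomologicalComplex.exactAt_iff_isZero_homology,
      HomologicalComplex.exactAt_iff' _ n (n + 1) (n + 2) (by simp) (by simp),
      ShortComplex.moduleCat_exact_iff]
    rfl
  rw [exact_iff]
  constructor
  · refine fun h => subsingleton_of_forall_eq 0 fun α => ?_
    obtain ⟨f, hf, rfl⟩ := P.extMk_surjective α (n + 2) rfl
    exact (P.extMk_eq_zero_iff f (n + 2) rfl hf n rfl).2 (h f hf)
  · exact fun _ f hf =>
      (P.extMk_eq_zero_iff f (n + 2) rfl hf n rfl).1 (Subsingleton.elim _ _)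

variable [HasExt.{w} C] {X Y Z : C}

/-- A class `δ ∈ Ext^n(X, Y)` is dimension shifting if multiplication by `δ` is injective on
`Ext^i(Y, T)` for all `i > 0` and all `T`. The class in `Ext^n(X, Ωⁿ X)` of a truncated projective
resolution is the model case. -/
def IsDimensionShifting {n : ℕ} (δ : Abelian.Ext.{w} X Y n) : Prop :=
  ∀ ⦃T : C⦄ ⦃i j : ℕ⦄ (hij : n + i = j), 0 < i →
    ∀ z : Abelian.Ext.{w} Y T i, δ.comp z hij = 0 → z = 0

namespace IsDimensionShifting

lemma mk₀_of_isIso (e : X ⟶ Y) [IsIso e] : IsDimensionShifting (Ext.mk₀.{w} e) := by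
  intro T i j hij _ z hz
  obtain rfl : i = j := by omega
  have cancel : (Ext.mk₀ (inv e)).comp ((Ext.mk₀ e).comp z hij) (zero_add i) = z := by
    rw [Ext.mk₀_comp_mk₀_assoc, IsIso.inv_hom_id, Ext.mk₀_id_comp]
  rw [← cancel, hz, Ext.comp_zero]

lemma comp {p q r : ℕ} {x : Abelian.Ext.{w} X Y p} {y : Abelian.Ext.{w} Y Z q}
    (hx : IsDimensionShifting x) (hy : IsDimensionShifting y) (h : p + q = r) :
    IsDimensionShifting (x.comp y h) := by
  intro T i j hij hi z hz
  rw [Ext.comp_assoc x y z h rfl (by omega)] at hz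
  exact hy rfl hi z (hx (by omega) (by omega) _ hz)

lemma extClass {S : ShortComplex C} (hS : S.ShortExact) [Projective S.X₂] :
    IsDimensionShifting (hS.extClass : Abelian.Ext.{w} S.X₃ S.X₁ 1) := by
  intro T i j hij hi z hz
  obtain ⟨i, rfl⟩ := Nat.exists_eq_succ_of_ne_zero hi.ne'
  obtain ⟨y, rfl⟩ := Ext.contravariant_sequence_exact₁ hS T z hij hz
  rw [Ext.eq_zero_of_projective y, Ext.comp_zero]

lemma eventually_subsingleton_ext_X₂ {S : ShortComplex C} (hS : S.ShortExact) {n : ℕ}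
    {δ : Abelian.Ext.{w} S.X₁ S.X₃ n} (hδ : IsDimensionShifting δ) {T : C}
    (hT : ∀ᶠ i in atTop, Subsingleton (Abelian.Ext.{w} S.X₁ T i)) :
    ∀ᶠ i in atTop, Subsingleton (Abelian.Ext.{w} S.X₂ T i) := by
  have shifted := (tendsto_add_atTop_nat n).eventually hT
  filter_upwards [hT, shifted, eventually_gt_atTop 0] with i _ _ hi
  refine subsingleton_of_forall_eq 0 fun x => ?_
  obtain ⟨y, rfl⟩ := Ext.contravariant_sequence_exact₂ hS T x (Subsingleton.elim _ _)
  rw [hδ (add_comm n i) hi y (Subsingleton.elim _ _), Ext.comp_zero]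

end IsDimensionShifting

/-- The power `η ^ m` of a self-extension for the Yoneda product, as an element of
`Ext^{d m}(X, X)`. -/
noncomputable def extPow {d : ℕ} (η : Abelian.Ext.{w} X X d) :
    (m : ℕ) → Abelian.Ext.{w} X X (d * m)
  | 0 => Ext.mk₀ (𝟙 X)
  | m + 1 => (extPow η m).comp η rfl

lemma exists_extPow_eq_zero {d : ℕ} (hd : 0 < d) (η : Abelian.Ext.{w} X X d)
    (hX : ∀ᶠ i in atTop, Subsingleton (Abelian.Ext.{w} X X i)) :
    ∃ m, extPow η m = 0 := by
  obtain ⟨m, hm⟩ := ((tendsto_id.const_mul_atTop' hd).eventually hX).exists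
  exact ⟨m, hm.elim _ _⟩

variable (R : Type*) [CommRing R] [Linear R C] (T : C)

/-- The length of the kernel of multiplication by `x`, from `Ext^i(Y, T)` to `Ext^{p+i}(X, T)`. -/
noncomputable def annLength {p : ℕ} (x : Abelian.Ext.{w} X Y p) (i : ℕ) : ℕ∞ :=
  Module.length R (LinearMap.ker (Ext.precompOfLinear x R T (rfl : p + i = p + i)))

lemma annLength_eq {p i j : ℕ} (x : Abelian.Ext.{w} X Y p) (h : p + i = j) :
    annLength R T x i = Module.length R (LinearMap.ker (Ext.precompOfLinear x R T h)) := by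
  subst h
  rfl

lemma annLength_zero (p i : ℕ) :
    annLength R T (0 : Abelian.Ext.{w} X Y p) i = Module.length R (Abelian.Ext.{w} Y T i) := by
  rw [annLength, Ext.precompOfLinear, map_zero, LinearMap.ker_zero, Module.length_top]

lemma annLength_mk₀_id (i : ℕ) : annLength R T (Ext.mk₀.{w} (𝟙 X)) i = 0 := by
  rw [annLength_eq R T _ (zero_add i), Module.length_eq_zero_iff,
    Submodule.subsingleton_iff_eq_bot, LinearMap.ker_eq_bot']
  intro y hy
  rwa [← Ext.mk₀_id_comp y]

lemma annLength_comp_le {p q r : ℕ} (x : Abelian.Ext.{w} X Y p) (y : Abelian.Ext.{w} Y Z q)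
    (h : p + q = r) (i : ℕ) :
    annLength R T (x.comp y h) i ≤ annLength R T y i + annLength R T x (q + i) := by
  have factor : Ext.precompOfLinear (x.comp y h) R T (rfl : r + i = r + i) =
      Ext.precompOfLinear x R T (by omega) ∘ₗ Ext.precompOfLinear y R T (rfl : q + i = q + i) :=
    LinearMap.ext fun z => Ext.comp_assoc x y z h rfl (by omega)
  rw [annLength, factor, annLength_eq R T x (by omega : p + (q + i) = r + i)]
  exact length_ker_comp_le _ _

lemma annLength_extPow_le {d : ℕ} (η : Abelian.Ext.{w} X X d) (m i : ℕ) :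
    annLength R T (extPow η m) i ≤ ∑ j ∈ Finset.range m, annLength R T η (d * j + i) := by
  induction m generalizing i with
  | zero => exact (annLength_mk₀_id R T i).le
  | succ m ih =>
    calc annLength R T (extPow η (m + 1)) i
        ≤ annLength R T η i + annLength R T (extPow η m) (d + i) :=
          annLength_comp_le R T (extPow η m) η rfl i
      _ ≤ annLength R T η i + ∑ j ∈ Finset.range m, annLength R T η (d * j + (d + i)) := by
          gcongr
          exact ih (d + i)
      _ = ∑ j ∈ Finset.range (m + 1), annLength R T η (d * j + i) := by
          rw [Finset.sum_range_succ', add_comm]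
          simp only [mul_add, mul_one, mul_zero, zero_add, add_assoc]

lemma annLength_comp_extClass_le {S : ShortComplex C} (hS : S.ShortExact) {n : ℕ}
    {δ : Abelian.Ext.{w} S.X₁ S.X₃ n} (hδ : IsDimensionShifting δ) (i : ℕ) :
    annLength R T (δ.comp hS.extClass rfl) i ≤ Module.length R (Abelian.Ext.{w} S.X₂ T i) := by
  let restrict := Ext.precompOfLinear (Ext.mk₀.{w} S.f) R T (zero_add i)
  have ker_le_range : LinearMap.ker (Ext.precompOfLinear (δ.comp hS.extClass rfl) R T rfl) ≤
      LinearMap.range restrict := by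
    intro x (hx : (δ.comp hS.extClass rfl).comp x rfl = 0)
    rw [Ext.comp_assoc _ _ _ _ rfl (by omega)] at hx
    exact Ext.contravariant_sequence_exact₁ hS T x rfl (hδ _ (by omega) _ hx)
  exact (Module.length_le_of_injective _ (Submodule.inclusion_injective ker_le_range)).trans
    (Module.length_le_of_surjective _ restrict.surjective_rangeRestrict)

lemma exists_length_ext_X₁_le_sum {S : ShortComplex C} (hS : S.ShortExact) {n : ℕ}
    {δ : Abelian.Ext.{w} S.X₁ S.X₃ n} (hδ : IsDimensionShifting δ)
    (hX : ∀ᶠ i in atTop, Subsingleton (Abelian.Ext.{w} S.X₁ S.X₁ i)) :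
    ∃ m, ∀ i, Module.length R (Abelian.Ext.{w} S.X₁ T i) ≤
      ∑ j ∈ Finset.range m, Module.length R (Abelian.Ext.{w} S.X₂ T ((n + 1) * j + i)) := by
  let η : Abelian.Ext.{w} S.X₁ S.X₁ (n + 1) := δ.comp hS.extClass rfl
  obtain ⟨m, hm⟩ := exists_extPow_eq_zero n.succ_pos η hX
  refine ⟨m, fun i => ?_⟩
  rw [← annLength_zero R T ((n + 1) * m), ← hm]
  exact (annLength_extPow_le R T η m i).trans
    (Finset.sum_le_sum fun j _ => annLength_comp_extClass_le R T hS hδ _)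

end AbelianCategory

lemma isBigO_zpow_comp_add_left {f : ℕ → ℝ} {z : ℤ}
    (hf : f =O[atTop] fun n : ℕ => (n : ℝ) ^ z) (d : ℕ) :
    (fun n => f (d + n)) =O[atTop] fun n : ℕ => (n : ℝ) ^ z := by
  have shift_equiv : (fun n : ℕ => ((d + n : ℕ) : ℝ)) ~[atTop] fun n : ℕ => (n : ℝ) := by
    simp only [Nat.cast_add, add_comm (d : ℝ)]
    exact IsEquivalent.refl.add_const_of_norm_tendsto_atTop
      (tendsto_norm_atTop_atTop.comp tendsto_natCast_atTop_atTop)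
  have tendsto_shift : Tendsto (fun n => d + n) atTop atTop :=
    tendsto_atTop_mono (fun n => Nat.le_add_left n d) tendsto_id
  exact (hf.comp_tendsto tendsto_shift).trans (shift_equiv.zpow z).isBigO

section Modules

variable {A : Type u} [CommRing A]
variable {M N K S : Type u} [AddCommGroup M] [Module A M] [AddCommGroup N] [Module A N]
  [AddCommGroup K] [Module A K] [AddCommGroup S] [Module A S]

lemma IsSES.shortExact {f : M →ₗ[A] K} {g : K →ₗ[A] S} (h : IsSES f g) :
    (ModuleCat.shortComplexOfCompEqZero f g h.2.1.linearMap_comp_eq_zero).ShortExact :=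
  ModuleCat.shortComplex_shortExact _ h.2.1 h.1 h.2.2

lemma eventually_extVanish_iff :
    (∀ᶠ i in atTop, extVanish A M i N) ↔
      ∀ᶠ i in atTop, Subsingleton (Abelian.Ext.{u} (ModuleCat.of A M) (ModuleCat.of A N) i) := by
  refine eventually_congr ?_
  filter_upwards [eventually_gt_atTop 0] with i hi
  obtain ⟨i, rfl⟩ := Nat.exists_eq_succ_of_ne_zero hi.ne'
  rw [extVanish, ← ModuleCat.isZero_iff_subsingleton]
  exact isZero_ext_obj_succ_iff _ _ _

variable [IsLocalRing A]

lemma length_residueField : Module.length A (ResidueField A) = 1 := by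
  rw [Module.length_eq_of_surjective (R := ResidueField A) residue_surjective,
    Module.length_eq_one]

lemma linearMap_residueField_eq_zero {ι : Type*} [Finite ι]
    (f : (ι → A) →ₗ[A] ResidueField A) {x : ι → A} (hx : ∀ i, x i ∈ maximalIdeal A) :
    f x = 0 := by
  classical
  cases nonempty_fintype ι
  rw [LinearMap.pi_apply_eq_sum_univ f x]
  refine Finset.sum_eq_zero fun i _ => ?_
  rw [Algebra.smul_def, ResidueField.algebraMap_eq, (residue_eq_zero_iff (x i)).2 (hx i), zero_mul]

variable (A) in
/-- The Betti number `β_n(M) = dim_k Ext^n_A(M, k)`, computed as the length over `A` since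
`Ext^n_A(M, k)` is killed by the maximal ideal. -/
noncomputable def betti (M : Type u) [AddCommGroup M] [Module A M] (n : ℕ) : ℕ∞ :=
  Module.length A
    (Abelian.Ext.{u} (ModuleCat.of A M) (ModuleCat.of A (ResidueField A)) n)

namespace MinFreeRes

/-- The minimal free resolution of the first syzygy obtained by truncation. -/
def syzygy (R : MinFreeRes A M) : MinFreeRes A (LinearMap.ker R.aug) where
  b n := R.b (n + 1)
  d n := R.d (n + 1)
  aug := (R.d 0).codRestrict _ R.exact_zero.apply_apply_eq_zero
  aug_surjective := by
    rintro ⟨y, hy⟩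
    obtain ⟨x, hx⟩ := (R.exact_zero y).1 hy
    exact ⟨x, Subtype.ext hx⟩
  exact_zero x := by
    rw [← R.exact_succ 0 x]
    exact Subtype.ext_iff
  exact_succ n := R.exact_succ (n + 1)
  minimal n := R.minimal (n + 1)

lemma mem_maximalIdeal_of_mem_ker_aug (R : MinFreeRes A M) {x : Fin (R.b 0) → A}
    (hx : x ∈ LinearMap.ker R.aug) (i : Fin (R.b 0)) : x i ∈ maximalIdeal A := by
  obtain ⟨y, rfl⟩ := (R.exact_zero x).1 hx
  exact R.minimal 0 y i

lemma shortExact (R : MinFreeRes A M) : R.aug.shortComplexKer.ShortExact :=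
  LinearMap.shortExact_shortComplexKer R.aug_surjective

lemma linearMap_residueField_comp_subtype (R : MinFreeRes A M)
    (f : (Fin (R.b 0) → A) →ₗ[A] ResidueField A) : f ∘ₗ (LinearMap.ker R.aug).subtype = 0 :=
  LinearMap.ext fun x => linearMap_residueField_eq_zero f (R.mem_maximalIdeal_of_mem_ker_aug x.2)

lemma betti_zero (R : MinFreeRes A M) : betti A M 0 = R.b 0 := by
  have bijective : Function.Bijective (LinearMap.lcomp A (ResidueField A) R.aug) :=
    ⟨LinearMap.lcomp_injective_of_surjective _ R.aug_surjective, fun f =>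
      (LinearMap.exact_lcomp_of_exact_of_surjective (ResidueField A)
        (LinearMap.exact_subtype_ker_map R.aug) R.aug_surjective f).1
        (R.linearMap_residueField_comp_subtype f)⟩
  calc betti A M 0
      = Module.length A (M →ₗ[A] ResidueField A) :=
        ((Ext.linearEquiv₀ (R := A)).trans (ModuleCat.homLinearEquiv (S := A))).length_eq
    _ = Module.length A ((Fin (R.b 0) → A) →ₗ[A] ResidueField A) :=
        (LinearEquiv.ofBijective _ bijective).length_eq
    _ = Module.length A (Fin (R.b 0) → ResidueField A) :=
        ((Pi.basisFun A (Fin (R.b 0))).constr A).length_eq.symm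
    _ = R.b 0 := by simp [length_residueField]

lemma betti_succ (R : MinFreeRes A M) (n : ℕ) :
    betti A M (n + 1) = betti A (LinearMap.ker R.aug) n := by
  let k := ModuleCat.of A (ResidueField A)
  have hS := R.shortExact
  have restrict_eq_zero (y : Abelian.Ext.{u} R.aug.shortComplexKer.X₂ k n) :
      (Ext.mk₀ R.aug.shortComplexKer.f).comp y (zero_add n) = 0 := by
    cases n with
    | zero =>
      obtain ⟨f, rfl⟩ := Ext.homEquiv₀.symm.surjective y
      rw [Ext.homEquiv₀_symm_apply, Ext.mk₀_comp_mk₀, Ext.mk₀_eq_zero_iff]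
      exact ModuleCat.hom_ext (R.linearMap_residueField_comp_subtype f.hom)
    | succ n => rw [Ext.eq_zero_of_projective y, Ext.comp_zero]
  have bijective :
      Function.Bijective (Ext.precompOfLinear hS.extClass A k (add_comm 1 n)) := by
    refine ⟨(injective_iff_map_eq_zero _).2 fun x hx => ?_,
      precomp_extClass_surjective_of_projective_X₂ k hS n⟩
    obtain ⟨y, rfl⟩ := Ext.contravariant_sequence_exact₁ hS k x (add_comm 1 n) hx
    exact restrict_eq_zero y
  exact (LinearEquiv.ofBijective _ bijective).length_eq.symm

lemma betti_eq (R : MinFreeRes A M) (n : ℕ) : betti A M n = R.b n := by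
  induction n generalizing M with
  | zero => exact R.betti_zero
  | succ n ih => rw [R.betti_succ, ih R.syzygy, syzygy]

lemma hasComplexityLE_iff (R : MinFreeRes A M) (t : ℕ) :
    HasComplexityLE A M t ↔
      (fun n => (R.b n : ℝ)) =O[atTop] fun n : ℕ => (n : ℝ) ^ ((t : ℤ) - 1) := by
  have b_unique (R' : MinFreeRes A M) (n : ℕ) : R'.b n = R.b n :=
    Nat.cast_injective ((R'.betti_eq n).symm.trans (R.betti_eq n))
  have norm_zpow (n : ℕ) : ‖(n : ℝ) ^ ((t : ℤ) - 1)‖ = (n : ℝ) ^ ((t : ℤ) - 1) :=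
    Real.norm_of_nonneg (by positivity)
  simp only [isBigO_iff, Real.norm_natCast, norm_zpow]
  refine ⟨fun ⟨R', a, ha⟩ => ⟨a, ?_⟩, fun ⟨a, ha⟩ => ⟨R, a, ha⟩⟩
  simpa only [b_unique R'] using ha

end MinFreeRes

lemma HasComplexityLE.of_betti_le_sum {t d m : ℕ} (hK : HasComplexityLE A K t)
    (R : MinFreeRes A M)
    (h : ∀ i, betti A M i ≤ ∑ j ∈ Finset.range m, betti A K (d * j + i)) :
    HasComplexityLE A M t := by
  obtain ⟨R', -⟩ := id hK
  rw [R'.hasComplexityLE_iff] at hK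
  rw [R.hasComplexityLE_iff]
  have b_le (i : ℕ) : (R.b i : ℝ) ≤ ∑ j ∈ Finset.range m, (R'.b (d * j + i) : ℝ) := by
    have := h i
    simp only [R.betti_eq, R'.betti_eq] at this
    exact_mod_cast this
  have sum_isBigO : (fun i => ∑ j ∈ Finset.range m, (R'.b (d * j + i) : ℝ)) =O[atTop]
      fun n : ℕ => (n : ℝ) ^ ((t : ℤ) - 1) :=
    IsBigO.fun_sum fun j _ => isBigO_zpow_comp_add_left hK (d * j)
  exact (IsBigO.of_norm_le fun i => by simpa only [Real.norm_natCast] using b_le i).trans sum_isBigO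

namespace IsSyzygyOf

lemma exists_isSyzygyOf_ker_aug {n : ℕ} (h : IsSyzygyOf A M S (n + 1)) :
    ∃ R : MinFreeRes A M, IsSyzygyOf A (LinearMap.ker R.aug) S n := by
  match n, h with
  | 0, h => exact h
  | 1, ⟨R, ⟨e⟩⟩ =>
    exact ⟨R, R.syzygy, ⟨e.trans (LinearEquiv.ofEq _ _ (LinearMap.ker_codRestrict _ _ _).symm)⟩⟩
  | n + 2, ⟨R, ⟨e⟩⟩ => exact ⟨R, R.syzygy, ⟨e⟩⟩

lemma exists_isDimensionShifting {n : ℕ} (h : IsSyzygyOf A M S n) :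
    ∃ δ : Abelian.Ext.{u} (ModuleCat.of A M) (ModuleCat.of A S) n, IsDimensionShifting δ := by
  induction n generalizing M with
  | zero =>
    obtain ⟨e⟩ := h
    exact ⟨_, .mk₀_of_isIso e.symm.toModuleIso.hom⟩
  | succ n ih =>
    obtain ⟨R, hR⟩ := h.exists_isSyzygyOf_ker_aug
    obtain ⟨δ, hδ⟩ := ih hR
    exact ⟨_, (IsDimensionShifting.extClass R.shortExact).comp hδ (add_comm 1 n)⟩

end IsSyzygyOf

lemma eventually_extVanish_of_isSES {n : ℕ}
    {f : M →ₗ[A] K} {g : K →ₗ[A] S} (hfg : IsSES f g) (hS : IsSyzygyOf A M S n)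
    (hN : ∀ᶠ i in atTop, extVanish A M i N) : ∀ᶠ i in atTop, extVanish A K i N := by
  obtain ⟨δ, hδ⟩ := hS.exists_isDimensionShifting
  rw [eventually_extVanish_iff] at hN ⊢
  exact hδ.eventually_subsingleton_ext_X₂ hfg.shortExact hN

lemma complexity_le_of_eventually_extVanish_self {n : ℕ} {f : M →ₗ[A] K} {g : K →ₗ[A] S}
    (hfg : IsSES f g) (hS : IsSyzygyOf A M S n) (R : MinFreeRes A M)
    (hM : ∀ᶠ i in atTop, extVanish A M i M) : complexity A M ≤ complexity A K := by
  obtain ⟨δ, hδ⟩ := hS.exists_isDimensionShifting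
  obtain ⟨m, hm⟩ := exists_length_ext_X₁_le_sum A (ModuleCat.of A (ResidueField A))
    hfg.shortExact hδ (eventually_extVanish_iff.1 hM)
  refine sInf_le_sInf ?_
  rintro _ ⟨t, rfl, hK⟩
  exact ⟨t, rfl, hK.of_betti_le_sum R hm⟩

lemma nonempty_minFreeRes_of_complexity_ne_top (h : complexity A M ≠ ⊤) :
    Nonempty (MinFreeRes A M) := by
  by_contra hR
  refine h (sInf_eq_top.2 ?_)
  rintro _ ⟨t, rfl, R, -⟩
  exact absurd ⟨R⟩ hR

lemma HasFiniteProjDim.complexity_eq_zero (h : HasFiniteProjDim A M) : complexity A M = 0 := by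
  obtain ⟨t, R, hR⟩ := h
  refine nonpos_iff_eq_zero.1 (sInf_le ⟨0, rfl, R, 0, ?_⟩)
  filter_upwards [eventually_gt_atTop t] with n hn
  simp [hR n hn]

lemma HasFreeRedCxCat.finite {M : ModuleCat.{u} A} (hM : HasFreeRedCxCat M) :
    Module.Finite A M := by
  cases hM <;> assumption

theorem complexity_lt_of_extVanish_against_frc_general {M : ModuleCat.{u} A}
    (hM : HasFreeRedCxCat M) {t : ℕ} (ht : 0 < t)
    (h : ∀ N : ModuleCat.{u} A, HasFreeRedCxCat N → complexity A N = t →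
      ∀ᶠ i in atTop, extVanish A M i N) :
    complexity A M < t := by
  induction hM with
  | of_finite_projDim M _ hpd =>
    rw [hpd.complexity_eq_zero]
    exact_mod_cast ht
  | step M K S n hM hKfin hpos hfin hsyz f g hses hcx hK ih =>
    have hK_lt : complexity A K < t :=
      ih fun N hN hNt => eventually_extVanish_of_isSES hses hsyz (h N hN hNt)
    have hM_eq : complexity A M = complexity A K + 1 := by
      rw [hcx, tsub_add_cancel_of_le (Order.one_le_iff_pos.2 hpos)]
    refine (hM_eq.trans_le (Order.add_one_le_of_lt hK_lt)).lt_of_ne fun hMt => ?_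
    have hself := h M (.step M K S n hM hKfin hpos hfin hsyz f g hses hcx hK) hMt
    obtain ⟨R⟩ := nonempty_minFreeRes_of_complexity_ne_top hfin
    have hle : complexity A M ≤ complexity A K :=
      complexity_le_of_eventually_extVanish_self hses hsyz R hself
    exact absurd hle (hM_eq ▸ (ENat.lt_add_one_iff hK_lt.ne_top).2 le_rfl).not_ge

end Modules

end ComplexityTest

/-- **Theorem 3.2 (complexity test)**: let `M` be a module of free reducible complexity
over the local ring `A` and `t` a (positive) natural number. If `Ext^i_A(M,N) = 0` for
`i ≫ 0` for every module `N` of free reducible complexity with `cx N = t`, then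
`cx M < t`. -/
theorem complexity_lt_of_extVanish_against_frc
    (A : Type u) [CommRing A] [IsLocalRing A] [IsNoetherianRing A]
    (M : Type u) [AddCommGroup M] [Module A M] [Module.Finite A M]
    (hM : HasFreeRedCx A M)
    (t : ℕ) (ht : 0 < t)
    (h : ∀ (N : Type u) [AddCommGroup N] [Module A N] [Module.Finite A N],
      HasFreeRedCx A N → complexity A N = t →
        ∀ᶠ i in Filter.atTop, extVanish A M i N) :
    complexity A M < (t : ℕ∞) :=
  complexity_lt_of_extVanish_against_frc_general hM ht fun N hN =>
    have := hN.finite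
    h N hN
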